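/- For all reals ρ₁, ρ₂ with 0 < ρ₁ < 1 and 0 < ρ₂ < 1 and every left-c.e. real α, if α is total ρ₁-speedable then α is total ρ₂-speedable; that is, whether a left-c.e. real is total ρ-speedable does not depend on the choice of ρ ∈ (0,1). -/

import Mathlib

/-- A real is left-c.e. if some computable nondecreasing sequence of rationals converges to it. -/
def LeftCE (α : ℝ) : Prop :=
  ∃ a : ℕ → ℚ, Computable a ∧ Monotone a ∧
    Filter.Tendsto (fun n => (a n : ℝ)) Filter.atTop (nhds α)

/-- `α` is total `ρ`-speedable: there is a nondecreasing total computable `g : ℚ → ℚ`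
with `q < g q < α` for every rational `q < α` and
`liminf_{q ↗ α} (α - g q)/(α - q) ≤ ρ`, the liminf taken over rationals `q`
tending to `α` from below. -/
def TotalRhoSpeedable (α ρ : ℝ) : Prop :=
  ∃ g : ℚ → ℚ, Computable g ∧ Monotone g ∧
    (∀ q : ℚ, (q : ℝ) < α → (q : ℝ) < (g q : ℝ) ∧ (g q : ℝ) < α) ∧
    Filter.liminf (fun q : ℚ => (α - (g q : ℝ)) / (α - (q : ℝ)))
      (Filter.comap (fun q : ℚ => (q : ℝ)) (nhdsWithin α (Set.Iio α))) ≤ ρ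

namespace TS
open Encodable

def cd (q : ℚ) : ℕ := @encode ℚ Rat.instEncodable q

theorem cd_inj : Function.Injective cd := @encode_injective ℚ Rat.instEncodable

theorem cd_ofNat (n : ℕ) : cd (Denumerable.ofNat ℚ n) = Nat.nth (· ∈ Set.range cd) n := by
  have hinf : (Set.range cd).Infinite := Set.infinite_range_of_injective cd_inj
  let : Infinite (Set.range cd) := hinf.to_subtype
  let : DecidablePred (· ∈ Set.range cd) := @decidableRangeEncode ℚ Rat.instEncodable
  have h1 : cd (Denumerable.ofNat ℚ n) = (Nat.Subtype.ofNat (Set.range cd) n : ℕ) := by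
    let : Denumerable (Set.range cd) := Nat.Subtype.denumerable (Set.range cd)
    have h2 : Denumerable.ofNat ℚ n =
      (@equivRangeEncode ℚ Rat.instEncodable).symm (Denumerable.ofNat (Set.range cd) n) :=
      Denumerable.ofEquiv_ofNat (Set.range cd) (@equivRangeEncode ℚ Rat.instEncodable) n
    have h3 : Denumerable.ofNat (Set.range cd) n = Nat.Subtype.ofNat (Set.range cd) n :=
      Denumerable.ofEquiv_ofNat ℕ _ n
    rw [h2, h3]
    have := (@equivRangeEncode ℚ Rat.instEncodable).apply_symm_apply
      (Nat.Subtype.ofNat (Set.range cd) n)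
    exact congrArg Subtype.val this
  rw [h1]
  have h4 := congrFun (Nat.nth_eq_orderIsoOfNat (p := (· ∈ Set.range cd)) hinf) n
  rw [h4]
  exact congrArg Subtype.val (Nat.Subtype.orderIsoOfNat_apply (s := Set.range cd) (n := n)).symm

def en (q : ℚ) : ℕ := @encode ℚ (Primcodable.ofDenumerable ℚ).toEncodable q

theorem en_inj : Function.Injective en :=
  @encode_injective ℚ (Primcodable.ofDenumerable ℚ).toEncodable

theorem prim_en : Primrec en := Primrec.encode

theorem ofNat_en (q : ℚ) : Denumerable.ofNat ℚ (en q) = q := Denumerable.ofNat_encode q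

open Classical in
theorem enc_eq (q : ℚ) : en q = Nat.count (· ∈ Set.range cd) (cd q) := by
  have hinf : (Set.range cd).Infinite := Set.infinite_range_of_injective cd_inj
  conv_rhs => rw [← ofNat_en q, cd_ofNat]
  exact (Nat.count_nth_of_infinite (p := (· ∈ Set.range cd)) hinf _).symm

theorem cd_eq (q : ℚ) : cd q = Nat.pair (encode q.num) q.den := rfl

theorem ez (n : ℤ) : encode n = if 0 ≤ n then 2 * n.natAbs else 2 * n.natAbs - 1 := by
  cases n with
  | ofNat n => show 2 * n = _ ; simp
  | negSucc n => show 2 * n + 1= _ ; simp; omega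

def pos (m : ℕ) : ℕ := if m.unpair.1 % 2 = 0 then m.unpair.1 / 2 else 0
def neg (m : ℕ) : ℕ := if m.unpair.1 % 2 = 0 then 0 else (m.unpair.1 + 1) / 2
def dn (m : ℕ) : ℕ := m.unpair.2

theorem dn_cd (q : ℚ) : dn (cd q) = q.den := by simp [dn, cd_eq]

theorem dn_pos (q : ℚ) : 0 < dn (cd q) := by rw [dn_cd]; exact q.den_pos

theorem num_cd (q : ℚ) : (pos (cd q) : ℤ) - neg (cd q) = q.num := by
  simp only [pos, neg, cd_eq, Nat.unpair_pair, ez]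
  split_ifs <;> omega

theorem val_cd (q : ℚ) : q = ((pos (cd q) : ℚ) - neg (cd q)) / dn (cd q) := by
  rw [dn_cd]
  have : ((pos (cd q) : ℚ) - neg (cd q)) = (q.num : ℚ) := by
    rw [← num_cd q]; push_cast; ring
  rw [this, Rat.num_div_den]

theorem mem_range_cd (m : ℕ) : m ∈ Set.range cd ↔
    0 < m.unpair.2 ∧ ∀ k < m.unpair.2 + 1, ¬ (k ∣ (m.unpair.1 + 1) / 2 ∧ k ∣ m.unpair.2 ∧ k ≠ 1) := by
  have hc : ∀ a d : ℕ, 0 < d → ((∀ k < d + 1, ¬ (k ∣ a ∧ k ∣ d ∧ k ≠ 1)) ↔ Nat.Coprime a d) := by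
    intro a d hd
    constructor
    · intro h
      by_contra hne
      exact h (Nat.gcd a d) (Nat.lt_succ_of_le (Nat.le_of_dvd hd (Nat.gcd_dvd_right _ _)))
        ⟨Nat.gcd_dvd_left _ _, Nat.gcd_dvd_right _ _, hne⟩
    · rintro h k - ⟨h1, h2, h3⟩
      exact h3 (Nat.eq_one_of_dvd_coprimes h h1 h2)
  constructor
  · rintro ⟨q, rfl⟩
    have hd := q.den_pos
    rw [cd_eq, Nat.unpair_pair]
    refine ⟨hd, (hc _ _ hd).2 ?_⟩
    have : (encode q.num + 1) / 2 = q.num.natAbs := by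
      rw [ez]; split_ifs <;> omega
    simp only [this]
    exact q.reduced
  · rintro ⟨hd, h⟩
    rw [hc _ _ hd] at h
    have hz : (Denumerable.ofNat ℤ m.unpair.1).natAbs = (m.unpair.1 + 1) / 2 := by
      have := ez (Denumerable.ofNat ℤ m.unpair.1)
      rw [Denumerable.encode_ofNat] at this
      split_ifs at this <;> omega
    refine ⟨⟨Denumerable.ofNat ℤ m.unpair.1, m.unpair.2, hd.ne', by rw [hz]; exact h⟩, ?_⟩
    rw [cd_eq]
    simp only [Denumerable.encode_ofNat, Nat.pair_unpair]

theorem prim_pos : Primrec pos :=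
  Primrec.ite (Primrec.eq.comp (Primrec.nat_mod.comp (Primrec.fst.comp Primrec.unpair)
    (Primrec.const 2)) (Primrec.const 0))
    (Primrec.nat_div.comp (Primrec.fst.comp Primrec.unpair) (Primrec.const 2)) (Primrec.const 0)

theorem prim_neg : Primrec neg :=
  Primrec.ite (Primrec.eq.comp (Primrec.nat_mod.comp (Primrec.fst.comp Primrec.unpair)
    (Primrec.const 2)) (Primrec.const 0)) (Primrec.const 0)
    (Primrec.nat_div.comp (Primrec.succ.comp (Primrec.fst.comp Primrec.unpair)) (Primrec.const 2))

theorem prim_dn : Primrec dn := Primrec.snd.comp Primrec.unpair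

theorem prim_dvd : PrimrecRel (fun a b : ℕ => a ∣ b) :=
  (Primrec.eq.comp (Primrec.nat_mod.comp Primrec.snd Primrec.fst) (Primrec.const 0)).of_eq
    fun x => (Nat.dvd_iff_mod_eq_zero).symm

theorem prim_mem : PrimrecPred (· ∈ Set.range cd) := by
  have hR : PrimrecRel (fun k m : ℕ =>
      ¬ (k ∣ (m.unpair.1 + 1) / 2 ∧ k ∣ m.unpair.2 ∧ k ≠ 1)) := by
    refine PrimrecPred.not (PrimrecPred.and ?_ (PrimrecPred.and ?_ (PrimrecPred.not ?_)))
    · exact prim_dvd.comp Primrec.fst (Primrec.nat_div.comp (Primrec.succ.comp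
        (Primrec.fst.comp (Primrec.unpair.comp Primrec.snd))) (Primrec.const 2))
    · exact prim_dvd.comp Primrec.fst (Primrec.snd.comp (Primrec.unpair.comp Primrec.snd))
    · exact Primrec.eq.comp Primrec.fst (Primrec.const 1)
  have h2 := hR.forall_lt.comp (Primrec.succ.comp prim_dn) Primrec.id
  have h1 : PrimrecPred (fun m : ℕ => 0 < m.unpair.2) :=
    Primrec.nat_lt.comp (Primrec.const 0) prim_dn
  exact (h1.and h2).of_eq fun m => (mem_range_cd m).symm

open Classical in
theorem prim_count : Primrec (fun n => Nat.count (· ∈ Set.range cd) n) := by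
  have := Primrec.list_length.comp ((Primrec.listFilter prim_mem).comp Primrec.list_range)
  refine this.of_eq fun n => ?_
  induction n with
  | zero => simp
  | succ n ih =>
    rw [Nat.count_succ, ← ih, List.range_succ, List.filter_append, List.length_append]
    congr 1
    by_cases h : n ∈ Set.range cd <;> simp only [List.filter_cons, h] <;> simp

theorem comp_search {β : Type} [Primcodable β] (f : β → ℕ) (R : β → ℕ → Bool)
    (hR : Computable₂ R) (h1 : ∀ x, R x (f x) = true) (h2 : ∀ x m, R x m = true → m = f x) :
    Computable f := by
  have h := Partrec.rfind (p := fun x m => (R x m : Part Bool)) hR.partrec₂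
  refine Partrec.of_eq h fun x => ?_
  obtain ⟨n, hn, -⟩ := Nat.rfind_min' (p := R x) (h1 x)
  have hs := Nat.rfind_spec hn
  have : n = f x := h2 x n (by simpa using hs)
  refine Part.eq_some_iff.2 ?_
  rw [← this]
  exact hn

theorem comp_cd : Computable cd := by
  classical
  refine comp_search cd (fun q m => decide (m ∈ Set.range cd ∧
    Nat.count (· ∈ Set.range cd) m = en q)) ?_ ?_ ?_
  · have : PrimrecPred (fun x : ℚ × ℕ => x.2 ∈ Set.range cd ∧
      Nat.count (· ∈ Set.range cd) x.2 = en x.1) :=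
      (prim_mem.comp Primrec.snd).and
        (Primrec.eq.comp (prim_count.comp Primrec.snd) (prim_en.comp Primrec.fst))
    exact this.decide.to_comp
  · intro q
    simp only [decide_eq_true_eq]
    exact ⟨⟨q, rfl⟩, (enc_eq q).symm⟩
  · intro q m hm
    simp only [decide_eq_true_eq] at hm
    obtain ⟨⟨r, rfl⟩, h⟩ := hm
    rw [← enc_eq r] at h
    rw [en_inj h]

def mk (x : ℕ × ℕ × ℕ) : ℚ := ((x.1 : ℚ) - x.2.1) / (x.2.2 + 1)

theorem mk_iff (x : ℕ × ℕ × ℕ) (q : ℚ) : q = mk x ↔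
    pos (cd q) * (x.2.2 + 1) + x.2.1 * dn (cd q) = x.1 * dn (cd q) + neg (cd q) * (x.2.2 + 1) := by
  have hd : (dn (cd q) : ℚ) ≠ 0 := by exact_mod_cast (dn_pos q).ne'
  have hx : (x.2.2 : ℚ) + 1 ≠ 0 := by positivity
  rw [show (q = mk x) = (((pos (cd q) : ℚ) - neg (cd q)) / dn (cd q) = mk x) by rw [← val_cd]]
  rw [mk, div_eq_div_iff hd hx, ← @Nat.cast_inj ℚ]
  push_cast
  constructor <;> intro h <;> linarith

theorem comp_mk : Computable mk := by
  classical
  have h : Computable (fun x => cd (mk x)) := by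
    refine comp_search _ (fun x m => decide (m ∈ Set.range cd ∧
      pos m * (x.2.2 + 1) + x.2.1 * dn m = x.1 * dn m + neg m * (x.2.2 + 1))) ?_ ?_ ?_
    · have : PrimrecPred (fun y : (ℕ × ℕ × ℕ) × ℕ => y.2 ∈ Set.range cd ∧
        pos y.2 * (y.1.2.2 + 1) + y.1.2.1 * dn y.2 = y.1.1 * dn y.2 + neg y.2 * (y.1.2.2 + 1)) := by
        have a1 : Primrec (fun y : (ℕ × ℕ × ℕ) × ℕ => y.1.1) := Primrec.fst.comp Primrec.fst
        have a2 : Primrec (fun y : (ℕ × ℕ × ℕ) × ℕ => y.1.2.1) :=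
          Primrec.fst.comp (Primrec.snd.comp Primrec.fst)
        have a3 : Primrec (fun y : (ℕ × ℕ × ℕ) × ℕ => y.1.2.2 + 1) :=
          Primrec.succ.comp (Primrec.snd.comp (Primrec.snd.comp Primrec.fst))
        have b1 : Primrec (fun y : (ℕ × ℕ × ℕ) × ℕ => pos y.2) := prim_pos.comp Primrec.snd
        have b2 : Primrec (fun y : (ℕ × ℕ × ℕ) × ℕ => neg y.2) := prim_neg.comp Primrec.snd
        have b3 : Primrec (fun y : (ℕ × ℕ × ℕ) × ℕ => dn y.2) := prim_dn.comp Primrec.snd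
        exact (prim_mem.comp Primrec.snd).and (Primrec.eq.comp
          (Primrec.nat_add.comp (Primrec.nat_mul.comp b1 a3) (Primrec.nat_mul.comp a2 b3))
          (Primrec.nat_add.comp (Primrec.nat_mul.comp a1 b3) (Primrec.nat_mul.comp b2 a3)))
      exact this.decide.to_comp
    · intro x
      simp only [decide_eq_true_eq]
      exact ⟨⟨_, rfl⟩, (mk_iff x _).1 rfl⟩
    · intro x m hm
      simp only [decide_eq_true_eq] at hm
      obtain ⟨⟨r, rfl⟩, h⟩ := hm
      rw [← mk_iff x r] at h
      rw [h]
  refine Computable.encode_iff.1 ?_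
  exact (prim_count.to_comp.comp h).of_eq fun x => (enc_eq _).symm

def P (q : ℚ) : ℕ := pos (cd q)
def N (q : ℚ) : ℕ := neg (cd q)
def D (q : ℚ) : ℕ := dn (cd q)

theorem comp_P : Computable P := prim_pos.to_comp.comp comp_cd
theorem comp_N : Computable N := prim_neg.to_comp.comp comp_cd
theorem comp_D : Computable D := prim_dn.to_comp.comp comp_cd
theorem D_pos (q : ℚ) : 0 < D q := dn_pos q
theorem D_posQ (q : ℚ) : (0 : ℚ) < D q := by exact_mod_cast D_pos q
theorem PND (q : ℚ) : q = ((P q : ℚ) - N q) / D q := val_cd q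
theorem PND_mul (q : ℚ) : q * D q = (P q : ℚ) - N q :=
  (eq_div_iff (D_posQ q).ne').1 (PND q)

theorem mk_eq (a b d : ℕ) (hd : 0 < d) : mk (a, b, d - 1) = ((a : ℚ) - b) / d := by
  simp only [mk]
  rw [show ((d - 1 : ℕ) : ℚ) + 1 = d by
    have : d - 1 + 1 = d := by omega
    exact_mod_cast this]

section ops
variable {β : Type} [Primcodable β]

theorem nadd {f g : β → ℕ} (hf : Computable f) (hg : Computable g) :
    Computable (fun x => f x + g x) := Primrec.nat_add.to_comp.comp hf hg
theorem nmul {f g : β → ℕ} (hf : Computable f) (hg : Computable g) :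
    Computable (fun x => f x * g x) := Primrec.nat_mul.to_comp.comp hf hg

theorem qmk {a b d : β → ℕ} (ha : Computable a) (hb : Computable b) (hd : Computable d)
    (h0 : ∀ x, 0 < d x) : Computable (fun x => ((a x : ℚ) - b x) / d x) := by
  have h := comp_mk.comp (ha.pair (hb.pair (Primrec.nat_sub.to_comp.comp hd (Computable.const 1))))
  exact h.of_eq fun x => mk_eq _ _ _ (h0 x)

theorem qadd {f g : β → ℚ} (hf : Computable f) (hg : Computable g) :
    Computable (fun x => f x + g x) := by
  have h := qmk
    (nadd (nmul (comp_P.comp hf) (comp_D.comp hg)) (nmul (comp_P.comp hg) (comp_D.comp hf)))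
    (nadd (nmul (comp_N.comp hf) (comp_D.comp hg)) (nmul (comp_N.comp hg) (comp_D.comp hf)))
    (nmul (comp_D.comp hf) (comp_D.comp hg)) (fun x => Nat.mul_pos (D_pos _) (D_pos _))
  refine h.of_eq fun x => ?_
  have h1 := (D_posQ (f x)).ne'
  have h2 := (D_posQ (g x)).ne'
  push_cast
  rw [div_eq_iff (mul_ne_zero h1 h2)]
  linear_combination (-(D (g x) : ℚ)) * PND_mul (f x) - (D (f x) : ℚ) * PND_mul (g x)

theorem qmul {f g : β → ℚ} (hf : Computable f) (hg : Computable g) :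
    Computable (fun x => f x * g x) := by
  have h := qmk
    (nadd (nmul (comp_P.comp hf) (comp_P.comp hg)) (nmul (comp_N.comp hf) (comp_N.comp hg)))
    (nadd (nmul (comp_P.comp hf) (comp_N.comp hg)) (nmul (comp_N.comp hf) (comp_P.comp hg)))
    (nmul (comp_D.comp hf) (comp_D.comp hg)) (fun x => Nat.mul_pos (D_pos _) (D_pos _))
  refine h.of_eq fun x => ?_
  have h1 := (D_posQ (f x)).ne'
  have h2 := (D_posQ (g x)).ne'
  push_cast
  rw [div_eq_iff (mul_ne_zero h1 h2)]
  have e1 := PND_mul (f x)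
  have e2 := PND_mul (g x)
  calc _ = ((P (f x) : ℚ) - N (f x)) * ((P (g x) : ℚ) - N (g x)) := by ring
    _ = _ := by rw [← e1, ← e2]; ring

theorem qsub {f g : β → ℚ} (hf : Computable f) (hg : Computable g) :
    Computable (fun x => f x - g x) :=
  (qadd hf (qmul (Computable.const (-1)) hg)).of_eq fun x => by ring

theorem qle {f g : β → ℚ} (hf : Computable f) (hg : Computable g) :
    Computable (fun x => decide (f x ≤ g x)) := by
  have h := (Primrec.nat_le.decide.to_comp).comp
    (nadd (nmul (comp_P.comp hf) (comp_D.comp hg)) (nmul (comp_N.comp hg) (comp_D.comp hf)))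
    (nadd (nmul (comp_P.comp hg) (comp_D.comp hf)) (nmul (comp_N.comp hf) (comp_D.comp hg)))
  refine h.of_eq fun x => ?_
  rw [decide_eq_decide]
  have h1 := D_posQ (f x)
  have h2 := D_posQ (g x)
  rw [← @Nat.cast_le ℚ, ← mul_le_mul_iff_left₀ (b := f x) (mul_pos h1 h2)]
  push_cast
  have e1 := PND_mul (f x)
  have e2 := PND_mul (g x)
  have e3 : f x * (D (f x) * D (g x)) = ((P (f x) : ℚ) - N (f x)) * D (g x) := by rw [← e1]; ring
  have e4 : g x * (D (f x) * D (g x)) = ((P (g x) : ℚ) - N (g x)) * D (f x) := by rw [← e2]; ring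
  rw [e3, e4]
  constructor <;> intro h <;> linarith

theorem qite {p : β → Prop} [DecidablePred p] {f g : β → ℚ}
    (hp : Computable (fun x => decide (p x))) (hf : Computable f) (hg : Computable g) :
    Computable (fun x => if p x then f x else g x) :=
  (Computable.cond hp hf hg).of_eq fun x => by by_cases h : p x <;> simp [h]

theorem qmax {f g : β → ℚ} (hf : Computable f) (hg : Computable g) :
    Computable (fun x => max (f x) (g x)) :=
  (qite (qle hf hg) hg hf).of_eq fun x => (max_def _ _).symm

theorem qmin {f g : β → ℚ} (hf : Computable f) (hg : Computable g) :
    Computable (fun x => min (f x) (g x)) :=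
  (qite (qle hf hg) hf hg).of_eq fun x => (min_def _ _).symm

end ops

def nu (n : ℕ) : ℚ := Denumerable.ofNat ℚ n

theorem nu_en (q : ℚ) : nu (en q) = q := ofNat_en q
theorem nu_inj : Function.Injective nu := by
  intro a b h
  have := congrArg (@encode ℚ Denumerable.toEncodable) h
  simpa only [nu, Denumerable.encode_ofNat] using this
theorem comp_nu : Computable nu := Computable.ofNat ℚ
theorem comp_en : Computable en := prim_en.to_comp

def step (n i : ℕ) (v w : ℚ) : ℚ := if nu n ≤ nu i then min v w else max v w

def loop (H : ℚ → ℚ) (l : List ℚ) : ℚ :=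
  Nat.rec (motive := fun _ => ℚ) (H (nu l.length))
    (fun i v => step l.length i v (l[i]?.getD 0)) l.length

def tbl (H : ℚ → ℚ) (n : ℕ) : List ℚ :=
  Nat.rec (motive := fun _ => List ℚ) [] (fun _ l => l ++ [loop H l]) n

def hN (H : ℚ → ℚ) (n : ℕ) : ℚ := loop H (tbl H n)

theorem comp_step {β : Type} [Primcodable β] {a b : β → ℕ} {v w : β → ℚ} (ha : Computable a)
    (hb : Computable b) (hv : Computable v) (hw : Computable w) :
    Computable (fun x => step (a x) (b x) (v x) (w x)) :=
  qite (qle (comp_nu.comp ha) (comp_nu.comp hb)) (qmin hv hw) (qmax hv hw)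

theorem comp_loop {H : ℚ → ℚ} (hH : Computable H) : Computable (loop H) := by
  have hlen : Computable (fun l : List ℚ => l.length) := Computable.list_length
  have h1 : Computable (fun z : List ℚ × ℕ × ℚ => z.1) := Computable.fst
  have h2 : Computable (fun z : List ℚ × ℕ × ℚ => z.2.1) := Computable.fst.comp Computable.snd
  have h3 : Computable (fun z : List ℚ × ℕ × ℚ => z.2.2) := Computable.snd.comp Computable.snd
  have h4 : Computable (fun z : List ℚ × ℕ × ℚ => z.1[z.2.1]?.getD 0) :=
    Computable.option_getD (Computable.list_getElem?.comp h1 h2) (Computable.const 0)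
  have h5 : Computable (fun z : List ℚ × ℕ × ℚ => z.1.length) := hlen.comp h1
  have h6 := comp_step h5 h2 h3 h4
  have h7 : Computable₂ (fun (l : List ℚ) (y : ℕ × ℚ) =>
    step l.length y.1 y.2 (l[y.1]?.getD 0)) := h6
  have h8 : Computable (fun l : List ℚ => H (nu l.length)) := hH.comp (comp_nu.comp hlen)
  have h9 := Computable.nat_rec hlen h8 h7
  exact h9

theorem comp_hN {H : ℚ → ℚ} (hH : Computable H) : Computable (hN H) := by
  refine (comp_loop hH).comp ?_
  refine Computable.nat_rec (f := fun n : ℕ => n)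
    (h := fun (_ : ℕ) (y : ℕ × List ℚ) => y.2 ++ [loop H y.2]) Computable.id
    (Computable.const []) ?_
  have h3 : Computable (fun z : ℕ × ℕ × List ℚ => z.2.2) := Computable.snd.comp Computable.snd
  exact Computable.list_concat.comp h3 ((comp_loop hH).comp h3)

theorem tbl_eq (H : ℚ → ℚ) (n : ℕ) : tbl H n = (List.range n).map (hN H) := by
  induction n with
  | zero => rfl
  | succ n ih =>
    rw [List.range_succ, List.map_append, ← ih]
    rfl

def stage (H : ℚ → ℚ) (n k : ℕ) : ℚ :=
  Nat.rec (motive := fun _ => ℚ) (H (nu n)) (fun i v => step n i v (hN H i)) k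

theorem hN_eq (H : ℚ → ℚ) (n : ℕ) : hN H n = stage H n n := by
  have hl : (tbl H n).length = n := by simp [tbl_eq]
  have : ∀ k ≤ n, Nat.rec (motive := fun _ => ℚ) (H (nu n))
    (fun i v => step n i v ((tbl H n)[i]?.getD 0)) k = stage H n k := by
    intro k hk
    induction k with
    | zero => rfl
    | succ k ih =>
      show step n k _ _ = step n k (stage H n k) (hN H k)
      rw [ih (by omega)]
      congr 1
      rw [tbl_eq, List.getElem?_map, List.getElem?_range (by omega)]
      rfl
  rw [← this n le_rfl]
  show loop H (tbl H n) = _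
  unfold loop
  rw [hl]

theorem stage_succ (H : ℚ → ℚ) (n k : ℕ) :
    stage H n (k + 1) = if nu n ≤ nu k then min (stage H n k) (hN H k)
      else max (stage H n k) (hN H k) := rfl

theorem hN_mono (H : ℚ → ℚ) (n : ℕ) : ∀ i < n,
    (nu i < nu n → hN H i ≤ hN H n) ∧ (nu n < nu i → hN H n ≤ hN H i) := by
  induction n using Nat.strong_induction_on with
  | _ n IH =>
  have IH' : ∀ i < n, ∀ j < n, nu i < nu j → hN H i ≤ hN H j := by
    intro i hi j hj h
    rcases lt_trichotomy i j with hij | hij | hij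
    · exact (IH j hj i hij).1 h
    · subst hij; exact le_rfl
    · exact (IH i hi j hij).2 h
  have key : ∀ k ≤ n, ∀ i < k, (nu i < nu n → hN H i ≤ stage H n k) ∧
      (nu n < nu i → stage H n k ≤ hN H i) := by
    intro k
    induction k with
    | zero => intro _ i hi; omega
    | succ k ih =>
      intro hk i hi
      have ih := ih (by omega)
      rw [stage_succ]
      rcases Nat.lt_succ_iff_lt_or_eq.1 hi with hik | rfl
      · have := ih i hik
        split_ifs with hc
        · refine ⟨fun h => le_min (this.1 h) ?_, fun h => min_le_of_left_le (this.2 h)⟩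
          exact IH' i (by omega) k (by omega) (h.trans_le hc)
        · push Not at hc
          refine ⟨fun h => le_max_of_le_left (this.1 h), fun h => max_le (this.2 h) ?_⟩
          exact IH' k (by omega) i (by omega) (hc.trans h)
      · split_ifs with hc
        · exact ⟨fun h => absurd hc (not_le.2 h), fun _ => min_le_right _ _⟩
        · push Not at hc
          exact ⟨fun _ => le_max_right _ _, fun h => absurd hc h.not_gt⟩
  intro i hi
  rw [hN_eq H n]
  exact key n le_rfl i hi

theorem clamp {H : ℚ → ℚ} (hH : Computable H) (Q : ℚ → ℚ → Prop) (h0 : ∀ q, Q q (H q))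
    (h1 : ∀ q q' v v', q' < q → Q q v → Q q' v' → Q q (max v v'))
    (h2 : ∀ q q' v v', q < q' → Q q v → Q q' v' → Q q (min v v')) :
    ∃ h : ℚ → ℚ, Computable h ∧ Monotone h ∧ ∀ q, Q q (h q) := by
  have hQ : ∀ n, Q (nu n) (hN H n) := by
    intro n
    induction n using Nat.strong_induction_on with
    | _ n IH =>
    have : ∀ k ≤ n, Q (nu n) (stage H n k) := by
      intro k
      induction k with
      | zero => intro _; exact h0 _
      | succ k ih =>
        intro hk
        have ih := ih (by omega)
        have hne : nu n ≠ nu k := fun h => by have := nu_inj h; omega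
        rw [stage_succ]
        split_ifs with hc
        · exact h2 _ _ _ _ (lt_of_le_of_ne hc hne) ih (IH k (by omega))
        · exact h1 _ _ _ _ (not_le.1 hc) ih (IH k (by omega))
    rw [hN_eq]
    exact this n le_rfl
  refine ⟨fun q => hN H (en q), (comp_hN hH).comp comp_en, ?_, fun q => ?_⟩
  · intro a b hab
    rcases hab.eq_or_lt with rfl | hlt
    · exact le_rfl
    · have hlt' : nu (en a) < nu (en b) := by rwa [nu_en, nu_en]
      rcases lt_trichotomy (en a) (en b) with hij | hij | hij
      · exact (hN_mono H _ _ hij).1 hlt'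
      · exact absurd (en_inj hij) hlt.ne
      · exact (hN_mono H _ _ hij).2 hlt'
  · have := hQ (en q)
    rwa [nu_en] at this

/-- the amplified map -/
def amp (g : ℚ → ℚ) (c : ℚ) (p : ℚ) : ℚ := p + c * (g p - p)

def nn (g : ℚ → ℚ) (M : ℚ) (K : ℕ) (q : ℚ) : ℕ := K * (P (q - M) * D (g q - q)) + 1

theorem nn_pos (g : ℚ → ℚ) (M : ℚ) (K : ℕ) (q : ℚ) : 0 < nn g M K q := by
  unfold nn; exact Nat.succ_pos _

def grid (M q : ℚ) (n i : ℕ) : ℚ := M + (q - M) * (((i : ℚ) - (0 : ℕ)) / n)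

def big (g : ℚ → ℚ) (c M : ℚ) (K : ℕ) (q : ℚ) : ℚ :=
  Nat.rec (motive := fun _ => ℚ) (g q)
    (fun i v => max v (amp g c (grid M q (nn g M K q) i))) (nn g M K q + 1)

def HH (g : ℚ → ℚ) (c M : ℚ) (K : ℕ) (q : ℚ) : ℚ :=
  if M ≤ q then (if g q ≤ q then q else big g c M K q) else g q

theorem comp_HH {g : ℚ → ℚ} (hg : Computable g) (c M : ℚ) (K : ℕ) : Computable (HH g c M K) := by
  have hid : Computable (fun q : ℚ => q) := Computable.id
  have hamp : Computable (amp g c) :=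
    qadd hid (qmul (Computable.const c) (qsub hg hid))
  have hnn : Computable (nn g M K) := by
    have a1 : Computable (fun q => P (q - M)) := comp_P.comp (qsub hid (Computable.const M))
    have a2 : Computable (fun q => D (g q - q)) := comp_D.comp (qsub hg hid)
    have a3 := nadd (nmul (Computable.const K) (nmul a1 a2)) (Computable.const 1)
    exact a3.of_eq fun q => by rw [nn]
  have hnn1 : Computable (fun q => nn g M K q + 1) := nadd hnn (Computable.const 1)
  have hbig : Computable (big g c M K) := by
    have a1 : Computable (fun z : ℚ × ℕ × ℚ => z.1) := Computable.fst
    have a2 : Computable (fun z : ℚ × ℕ × ℚ => z.2.1) := Computable.fst.comp Computable.snd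
    have a3 : Computable (fun z : ℚ × ℕ × ℚ => z.2.2) := Computable.snd.comp Computable.snd
    have a4 : Computable (fun z : ℚ × ℕ × ℚ => nn g M K z.1) := hnn.comp a1
    have a5 : Computable (fun z : ℚ × ℕ × ℚ => grid M z.1 (nn g M K z.1) z.2.1) := qadd (Computable.const M) (qmul (qsub a1 (Computable.const M))
      (qmk a2 (Computable.const 0) a4 (fun _ => nn_pos _ _ _ _)))
    have a6 : Computable (fun z : ℚ × ℕ × ℚ => amp g c (grid M z.1 (nn g M K z.1) z.2.1)) :=
      hamp.comp a5
    have a7 : Computable₂ (fun (q : ℚ) (y : ℕ × ℚ) =>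
      max y.2 (amp g c (grid M q (nn g M K q) y.1))) := qmax a3 a6
    have a8 := Computable.nat_rec hnn1 hg a7
    exact a8
  exact qite (qle (Computable.const M) hid) (qite (qle hg hid) hid hbig) hg

theorem big_ind (g : ℚ → ℚ) (c M : ℚ) (K : ℕ) (q : ℚ) (R : ℚ → Prop) (h0 : R (g q))
    (h : ∀ i ≤ nn g M K q, R (amp g c (grid M q (nn g M K q) i))) : R (big g c M K q) := by
  have : ∀ k ≤ nn g M K q + 1, R (Nat.rec (motive := fun _ => ℚ) (g q)
    (fun i v => max v (amp g c (grid M q (nn g M K q) i))) k) := by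
    intro k
    induction k with
    | zero => intro _; exact h0
    | succ k ih =>
      intro hk
      exact max_rec' R (ih (by omega)) (h k (by omega))
  exact this _ le_rfl

theorem big_ge (g : ℚ → ℚ) (c M : ℚ) (K : ℕ) (q : ℚ) : g q ≤ big g c M K q ∧
    ∀ i ≤ nn g M K q, amp g c (grid M q (nn g M K q) i) ≤ big g c M K q := by
  have : ∀ k, (g q ≤ (Nat.rec (motive := fun _ => ℚ) (g q)
    (fun i v => max v (amp g c (grid M q (nn g M K q) i))) k) ∧
    ∀ i < k, amp g c (grid M q (nn g M K q) i) ≤ (Nat.rec (motive := fun _ => ℚ) (g q)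
    (fun i v => max v (amp g c (grid M q (nn g M K q) i))) k)) := by
    intro k
    induction k with
    | zero => exact ⟨le_rfl, fun i hi => by omega⟩
    | succ k ih =>
      refine ⟨le_max_of_le_left ih.1, fun i hi => ?_⟩
      rcases Nat.lt_succ_iff_lt_or_eq.1 hi with hik | rfl
      · exact le_max_of_le_left (ih.2 i hik)
      · exact le_max_right _ _
  exact ⟨(this (nn g M K q + 1)).1, fun i hi => (this (nn g M K q + 1)).2 i (by omega)⟩

theorem grid_mem (M q : ℚ) (hMq : M ≤ q) (n i : ℕ) (hn : 0 < n) (hi : i ≤ n) :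
    M ≤ grid M q n i ∧ grid M q n i ≤ q := by
  have hn' : (0 : ℚ) < n := by exact_mod_cast hn
  have h0 : (0 : ℚ) ≤ ((i : ℚ) - (0 : ℕ)) / n := by
    simp only [Nat.cast_zero, sub_zero]; positivity
  have h1 : ((i : ℚ) - (0 : ℕ)) / n ≤ 1 := by
    rw [div_le_one hn']; simpa using hi
  unfold grid
  constructor
  · nlinarith
  · nlinarith

/-- every point of `[M,q]` has a grid point slightly above -/
theorem grid_near (M q p : ℚ) (n : ℕ) (hn : 0 < n) (hp : M ≤ p) (hpq : p ≤ q) :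
    ∃ i ≤ n, p ≤ grid M q n i ∧ grid M q n i ≤ p + (q - M) / n := by
  have hn' : (0 : ℚ) < n := by exact_mod_cast hn
  rcases (hp.trans hpq).eq_or_lt with h | h
  · refine ⟨0, by omega, ?_, ?_⟩ <;> simp [grid, h.symm] <;> linarith
  have hx : 0 < q - M := by linarith
  set t : ℚ := (p - M) / (q - M) * n with ht
  have ht0 : 0 ≤ t := mul_nonneg (div_nonneg (by linarith) hx.le) hn'.le
  have htn : t ≤ n := by
    have : (p - M) / (q - M) ≤ 1 := by rw [div_le_one hx]; linarith
    nlinarith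
  have hpt : p = M + (q - M) * (t / n) := by
    rw [ht]; field_simp; ring
  refine ⟨⌈t⌉₊, Nat.ceil_le.2 htn, ?_, ?_⟩
  · have h1 : t / n ≤ (⌈t⌉₊ : ℚ) / n := by gcongr; exact Nat.le_ceil t
    simp only [grid, Nat.cast_zero, sub_zero]
    nlinarith
  · have h1 : (⌈t⌉₊ : ℚ) / n ≤ t / n + 1 / n := by
      rw [← add_div]; gcongr; exact (Nat.ceil_lt_add_one ht0).le
    have h2 : (q - M) / n = (q - M) * (1 / n) := by ring
    simp only [grid, Nat.cast_zero, sub_zero]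
    rw [h2]
    nlinarith

theorem nn_bound (g : ℚ → ℚ) (M : ℚ) (K : ℕ) (q : ℚ) (hMq : M ≤ q) (hg : q < g q) :
    K * ((q - M) / nn g M K q) ≤ g q - q := by
  have hn : (0 : ℚ) < nn g M K q := by exact_mod_cast nn_pos g M K q
  have hy : 0 < g q - q := by linarith
  have hD := D_posQ (g q - q)
  have hyD : 1 ≤ (g q - q) * D (g q - q) := by
    have h1 := PND_mul (g q - q)
    have h2 : 0 < (g q - q) * D (g q - q) := mul_pos hy hD
    rw [h1] at h2 ⊢
    have h3 : N (g q - q) < P (g q - q) := by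
      have : (N (g q - q) : ℚ) < P (g q - q) := by linarith
      exact_mod_cast this
    have h4 : ((N (g q - q) + 1 : ℕ) : ℚ) ≤ P (g q - q) := by exact_mod_cast h3
    push_cast at h4
    linarith
  have hx : q - M ≤ P (q - M) := by
    have h1 := PND_mul (q - M)
    have h2 : (1 : ℚ) ≤ D (q - M) := by exact_mod_cast D_pos (q - M)
    have h3 : (0 : ℚ) ≤ N (q - M) := Nat.cast_nonneg _
    nlinarith
  rw [← mul_div_assoc, div_le_iff₀ hn]
  unfold nn
  push_cast
  have hK : (0 : ℚ) ≤ K := Nat.cast_nonneg _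
  have hP : (0 : ℚ) ≤ P (q - M) := Nat.cast_nonneg _
  calc (K : ℚ) * (q - M) ≤ K * P (q - M) := by gcongr
    _ = K * P (q - M) * 1 := by ring
    _ ≤ K * P (q - M) * ((g q - q) * D (g q - q)) := by gcongr
    _ ≤ _ := by nlinarith

theorem HH_near (g : ℚ → ℚ) (hmono : Monotone g) (c M : ℚ) (hc : 1 ≤ c) (K : ℕ) (q p : ℚ)
    (hq : q < g q) (hp : M ≤ p) (hpq : p ≤ q) :
    ∃ d : ℚ, K * d ≤ g q - q ∧ amp g c p - (c - 1) * d ≤ HH g c M K q := by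
  have hMq := hp.trans hpq
  refine ⟨_, nn_bound g M K q hMq hq, ?_⟩
  obtain ⟨i, hi, h1, h2⟩ := grid_near M q p (nn g M K q) (nn_pos g M K q) hp hpq
  have h3 := (big_ge g c M K q).2 i hi
  rw [HH, if_pos hMq, if_neg (not_le.2 hq)]
  refine le_trans ?_ h3
  have h4 := hmono h1
  unfold amp
  nlinarith

def FF (α : ℝ) : Filter ℚ := Filter.comap (fun q : ℚ => (q : ℝ)) (nhdsWithin α (Set.Iio α))

theorem evF {α : ℝ} {p : ℚ → Prop} : (∀ᶠ q in FF α, p q) ↔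
    ∃ M : ℚ, (M : ℝ) < α ∧ ∀ q : ℚ, M ≤ q → (q : ℝ) < α → p q := by
  rw [FF, Filter.eventually_comap]
  constructor
  · intro h
    obtain ⟨l, hl, hs⟩ := (mem_nhdsLT_iff_exists_Ioo_subset).1 h
    obtain ⟨M, h1, h2⟩ := exists_rat_btwn (show l < α from hl)
    refine ⟨M, h2, fun q hq hqα => ?_⟩
    have : (M : ℝ) ≤ q := by exact_mod_cast hq
    exact hs ⟨h1.trans_le this, hqα⟩ q rfl
  · rintro ⟨M, hM, h⟩
    filter_upwards [Ioo_mem_nhdsLT hM] with x hx q hq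
    subst hq
    exact h q (by exact_mod_cast hx.1.le) hx.2

theorem neF (α : ℝ) : (FF α).NeBot := by
  refine ⟨fun h => ?_⟩
  have h1 : ∀ᶠ _ in FF α, False := by rw [h]; exact Filter.eventually_bot
  obtain ⟨M, hM, h2⟩ := evF.1 h1
  exact h2 M le_rfl hM

theorem main (α ρ₁ ρ₂ : ℝ) (hρ₁ : ρ₁ < 1) (hρ₂ : 0 < ρ₂) (g : ℚ → ℚ) (hg : Computable g)
    (hmono : Monotone g) (hgα : ∀ q : ℚ, (q : ℝ) < α → (q : ℝ) < (g q : ℝ) ∧ (g q : ℝ) < α)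
    (hL : Filter.liminf (fun q : ℚ => (α - (g q : ℝ)) / (α - (q : ℝ))) (FF α) ≤ ρ₁) :
    ∃ g : ℚ → ℚ, Computable g ∧ Monotone g ∧
    (∀ q : ℚ, (q : ℝ) < α → (q : ℝ) < (g q : ℝ) ∧ (g q : ℝ) < α) ∧
    Filter.liminf (fun q : ℚ => (α - (g q : ℝ)) / (α - (q : ℝ))) (FF α) ≤ ρ₂ := by
  have hne := neF α
  obtain ⟨M0, hM0⟩ := exists_rat_lt α
  have hbd : ∀ g : ℚ → ℚ, (∀ q : ℚ, (q : ℝ) < α → (q : ℝ) < (g q : ℝ) ∧ (g q : ℝ) < α) →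
      ∀ᶠ q in FF α, 0 ≤ (α - (g q : ℝ)) / (α - (q : ℝ)) ∧ (α - (g q : ℝ)) / (α - (q : ℝ)) ≤ 1 := by
    intro g hgα
    refine evF.2 ⟨M0, hM0, fun q _ hq => ?_⟩
    have := hgα q hq
    have h1 : 0 < α - q := by linarith
    refine ⟨div_nonneg (by linarith) h1.le, ?_⟩
    rw [div_le_one h1]; linarith
  set L := Filter.liminf (fun q : ℚ => (α - (g q : ℝ)) / (α - (q : ℝ))) (FF α) with hLdef
  by_cases hcase : L ≤ ρ₂
  · exact ⟨g, hg, hmono, hgα, hcase⟩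
  push Not at hcase
  have hs : 0 < 1 - L := by linarith
  set s := 1 - L with hsdef
  obtain ⟨c, hc1, hc2⟩ := exists_rat_btwn
    (show (1 - ρ₂ / 2) / s < 1 / s from div_lt_div_of_pos_right (by linarith) hs)
  rw [div_lt_iff₀ hs] at hc1
  rw [lt_div_iff₀ hs] at hc2
  have hc : (1 : ℝ) < c := by nlinarith
  have hcQ : (1 : ℚ) ≤ c := by exact_mod_cast hc.le
  have hcp : (0 : ℝ) < c := by linarith
  -- lower bound on the quotient
  have hlow : L - (1 - c * s) / c < L := by
    have : 0 < (1 - c * s) / c := div_pos (by linarith) hcp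
    linarith
  have hev := Filter.eventually_lt_of_lt_liminf hlow ⟨0, (hbd g hgα).mono fun q h => h.1⟩
  obtain ⟨M, hM, hMq⟩ := evF.1 hev
  have hampα : ∀ p : ℚ, M ≤ p → (p : ℝ) < α → (amp g c p : ℝ) < α := by
    intro p hp hpα
    have h := hMq p hp hpα
    have h0 : 0 < α - p := by linarith
    rw [lt_div_iff₀ h0] at h
    have h3 : (c : ℝ) * (L - (1 - c * s) / c) = c - 1 := by
      rw [mul_sub, mul_div_cancel₀ _ hcp.ne', hsdef]; ring
    have h4 := mul_lt_mul_of_pos_left h hcp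
    rw [← mul_assoc, h3] at h4
    simp only [amp]
    push_cast
    nlinarith
  obtain ⟨K, hK⟩ := exists_nat_gt (((c : ℝ) - 1) / (ρ₂ / 4))
  have hρ4 : 0 < ρ₂ / 4 := by linarith
  have hK0 : (0 : ℝ) < K := lt_of_le_of_lt (div_nonneg (by linarith) hρ4.le) hK
  rw [div_lt_iff₀ hρ4] at hK
  let Q : ℚ → ℚ → Prop := fun q v =>
    ((q : ℝ) < α → (q : ℝ) < v ∧ (v : ℝ) < α ∧
      ∀ p : ℚ, M ≤ p → p ≤ q → (amp g c p : ℝ) - ρ₂ / 4 * (α - q) ≤ v) ∧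
    (α ≤ q → α ≤ v)
  obtain ⟨h, hcomp, hmon, hQ⟩ := clamp (comp_HH hg c M K) Q (by
    intro q
    refine ⟨fun hq => ?_, fun hq => ?_⟩
    · have hgq := hgα q hq
      have hgq1 : q < g q := by exact_mod_cast hgq.1
      refine ⟨?_, ?_, ?_⟩
      · rw [HH]
        split_ifs with a b
        · exact absurd hgq1 (not_lt.2 b)
        · have := (big_ge g c M K q).1
          exact_mod_cast hgq1.trans_le this
        · exact hgq.1
      · rw [HH]
        split_ifs with a b
        · exact hq
        · refine big_ind g c M K q (fun v => (v : ℝ) < α) hgq.2 fun i hi => ?_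
          obtain ⟨b1, b2⟩ := grid_mem M q a _ i (nn_pos g M K q) hi
          refine hampα _ b1 (lt_of_le_of_lt ?_ hq)
          exact_mod_cast b2
        · exact hgq.2
      · intro p hp hpq
        obtain ⟨d, hd1, hd2⟩ := HH_near g hmono c M hcQ K q p hgq1 hp hpq
        have hd1' : (K : ℝ) * d ≤ g q - q := by exact_mod_cast hd1
        have hd2' : (amp g c p : ℝ) - (c - 1) * d ≤ HH g c M K q := by exact_mod_cast hd2
        refine le_trans ?_ hd2'
        have : ((c : ℝ) - 1) * d ≤ ρ₂ / 4 * (α - q) := by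
          rcases le_or_gt (d : ℝ) 0 with hd | hd
          · have : 0 ≤ ρ₂ / 4 * (α - q) := mul_nonneg hρ4.le (by linarith)
            nlinarith
          · calc ((c : ℝ) - 1) * d ≤ (K * (ρ₂ / 4)) * d := by gcongr
              _ = ρ₂ / 4 * (K * d) := by ring
              _ ≤ ρ₂ / 4 * (α - q) := by gcongr; linarith
        linarith
    · have hMq : M ≤ q := by
        have : (M : ℝ) ≤ q := by linarith
        exact_mod_cast this
      rw [HH, if_pos hMq]
      split_ifs with b
      · exact hq
      · have h1 := (big_ge g c M K q).1
        have h2 : q ≤ big g c M K q := (not_le.1 b).le.trans h1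
        have h3 : (q : ℝ) ≤ big g c M K q := by exact_mod_cast h2
        linarith)
    (by
      intro q q' v v' hqq hv hv'
      have hqq' : (q' : ℝ) < q := by exact_mod_cast hqq
      refine ⟨fun hq => ?_, fun hq => ?_⟩
      · obtain ⟨a1, a2, a3⟩ := hv.1 hq
        obtain ⟨b1, b2, -⟩ := hv'.1 (hqq'.trans hq)
        push_cast
        exact ⟨lt_max_of_lt_left a1, max_lt a2 b2, fun p hp hpq => le_max_of_le_left (a3 p hp hpq)⟩
      · push_cast
        exact le_max_of_le_left (hv.2 hq))
    (by
      intro q q' v v' hqq hv hv'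
      have hqq' : (q : ℝ) < q' := by exact_mod_cast hqq
      refine ⟨fun hq => ?_, fun hq => ?_⟩
      · obtain ⟨a1, a2, a3⟩ := hv.1 hq
        push_cast
        refine ⟨lt_min a1 ?_, min_lt_of_left_lt a2, fun p hp hpq => le_min (a3 p hp hpq) ?_⟩
        · rcases lt_or_ge (q' : ℝ) α with hh | hh
          · exact hqq'.trans (hv'.1 hh).1
          · exact hq.trans_le (hv'.2 hh)
        · rcases lt_or_ge (q' : ℝ) α with hh | hh
          · have := (hv'.1 hh).2.2 p hp (hpq.trans hqq.le)
            nlinarith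
          · have h1 := hv'.2 hh
            have h2 : (p : ℝ) ≤ q := by exact_mod_cast hpq
            have h3 := hampα p hp (lt_of_le_of_lt h2 hq)
            have : 0 ≤ ρ₂ / 4 * (α - q) := mul_nonneg hρ4.le (by linarith)
            linarith
      · push_cast
        exact le_min (hv.2 hq) (hv'.2 (hq.trans hqq'.le)))
  have hhα : ∀ q : ℚ, (q : ℝ) < α → (q : ℝ) < (h q : ℝ) ∧ (h q : ℝ) < α :=
    fun q hq => ⟨((hQ q).1 hq).1, ((hQ q).1 hq).2.1⟩
  refine ⟨h, hcomp, hmon, hhα, ?_⟩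
  have hfr : ∃ᶠ q in FF α, (α - (g q : ℝ)) / (α - (q : ℝ)) < L + ρ₂ / 4 / c := by
    refine Filter.frequently_lt_of_liminf_lt ?_ ?_
    · exact Filter.isCoboundedUnder_ge_of_eventually_le _ ((hbd g hgα).mono fun q h => h.2)
    · have : 0 < ρ₂ / 4 / c := div_pos hρ4 hcp
      rw [← hLdef]; linarith
  refine Filter.liminf_le_of_frequently_le ?_ ⟨0, (hbd h hhα).mono fun q h => h.1⟩
  have hev2 : ∀ᶠ q in FF α, M ≤ q ∧ (q : ℝ) < α := evF.2 ⟨M, hM, fun q h1 h2 => ⟨h1, h2⟩⟩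
  refine (hfr.and_eventually hev2).mono ?_
  rintro q ⟨hu, hMq, hq⟩
  have h0 : 0 < α - q := by linarith
  rw [div_lt_iff₀ h0] at hu
  rw [div_le_iff₀ h0]
  have h1 := ((hQ q).1 hq).2.2 q hMq le_rfl
  simp only [amp] at h1
  push_cast at h1
  have h2 := mul_lt_mul_of_pos_left hu hcp
  have h3 : (c : ℝ) * ((L + ρ₂ / 4 / c) * (α - q)) = (c * L + ρ₂ / 4) * (α - q) := by
    field_simp
  rw [h3] at h2
  have h4 : (1 - ρ₂ / 2) * (α - q) ≤ c * (1 - L) * (α - q) := by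
    rw [hsdef] at hc1
    exact mul_le_mul_of_nonneg_right hc1.le h0.le
  nlinarith

end TS

theorem totalSpeedable_independent_of_rho (ρ₁ ρ₂ : ℝ)
    (h₁ : ρ₁ ∈ Set.Ioo (0 : ℝ) 1) (h₂ : ρ₂ ∈ Set.Ioo (0 : ℝ) 1)
    (α : ℝ) (hα : LeftCE α) (h : TotalRhoSpeedable α ρ₁) :
    TotalRhoSpeedable α ρ₂ := by
  obtain ⟨g, hg, hmono, hgα, hL⟩ := h
  exact TS.main α ρ₁ ρ₂ h₁.2 h₂.1 g hg hmono hgα hL
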